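/- Let Φ : ℝ^n ⇉ ℝ^m be a polyhedral sublinear mapping and 𝓛 ⊆ ℝ^m a linear subspace. Then for every b ∈ Im(Φ) and every u ∈ dom(Φ), dist(u, Φ⁻¹(b)) ≤ H(Φ|𝓛) · dist_𝓛(b, Φ(u)). -/

import Mathlib

/-!
STATEMENT 0 (Theorem 1, bound part): for a polyhedral sublinear mapping
`Φ : ℝ^n ⇉ ℝ^m` and a linear subspace `𝓛 ⊆ ℝ^m`, for every `b ∈ Im(Φ)` and
`u ∈ dom(Φ)`, `dist(u, Φ⁻¹(b)) ≤ H(Φ|𝓛) · dist_𝓛(b, Φ(u))`.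
The inequality against the infimum `dist_𝓛(b, Φ(u)) = inf{‖b-y‖ : y ∈ Φ(u), b-y ∈ 𝓛}`
(which may be `+∞` when no such `y` exists) is rendered equivalently as the
pointwise family of inequalities over all such `y`.
-/

open Metric

/-- The graph of a set-valued mapping. -/
def svGraph {n m : ℕ} (Φ : (Fin n → ℝ) → Set (Fin m → ℝ)) :
    Set ((Fin n → ℝ) × (Fin m → ℝ)) :=
  {p | p.2 ∈ Φ p.1}

/-- A polyhedral cone: an intersection of finitely many closed halfspaces through
the origin. -/
def IsPolyhedralCone {E : Type*} [AddCommGroup E] [Module ℝ E] (K : Set E) : Prop :=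
  ∃ (k : ℕ) (f : Fin k → (E →ₗ[ℝ] ℝ)), K = {x | ∀ i, 0 ≤ f i x}

/-- The tangent cone to `K` at `p`: `{z | p + t • z ∈ K for some t > 0}`. -/
def tangConeAt {E : Type*} [AddCommGroup E] [Module ℝ E] (K : Set E) (p : E) : Set E :=
  {z | ∃ t : ℝ, 0 < t ∧ p + t • z ∈ K}

/-- The collection `𝓣(K)` of tangent cones to `K` at its points. -/
def tangentCones {E : Type*} [AddCommGroup E] [Module ℝ E] (K : Set E) : Set (Set E) :=
  {T | ∃ p ∈ K, T = tangConeAt K p}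

/-- The set-valued mapping `Φ_T` with graph `T` is relatively surjective:
its image is a linear subspace. -/
def RelSurjGraph {n m : ℕ} (T : Set ((Fin n → ℝ) × (Fin m → ℝ))) : Prop :=
  ∃ W : Submodule ℝ (Fin m → ℝ), {y | ∃ x, (x, y) ∈ T} = (W : Set (Fin m → ℝ))

/-- `‖Φ_T⁻¹ | 𝓛‖ = max_{y ∈ Im(Φ_T) ∩ 𝓛, ‖y‖ ≤ 1} min_{x ∈ Φ_T⁻¹(y)} ‖x‖`. -/
noncomputable def nrmInvRes {n m : ℕ} (T : Set ((Fin n → ℝ) × (Fin m → ℝ)))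
    (L : Submodule ℝ (Fin m → ℝ)) : ℝ :=
  sSup {t | ∃ y : Fin m → ℝ, (∃ x, (x, y) ∈ T) ∧ y ∈ L ∧ ‖y‖ ≤ 1 ∧
    t = sInf {r | ∃ x : Fin n → ℝ, (x, y) ∈ T ∧ r = ‖x‖}}

/-- The Hoffman constant `H(Φ|𝓛) = max_{T ∈ S(Φ)} ‖Φ_T⁻¹|𝓛‖`. -/
noncomputable def HoffSV {n m : ℕ} (Φ : (Fin n → ℝ) → Set (Fin m → ℝ))
    (L : Submodule ℝ (Fin m → ℝ)) : ℝ :=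
  sSup {t | ∃ T ∈ tangentCones (svGraph Φ), RelSurjGraph T ∧ t = nrmInvRes T L}

/-!
Move the target along the segment from `y` to `b`, keeping a solution `x` over the moving point
`y + t • (b - y)`. If `Φ_T` is relatively surjective for the tangent cone `T` of the graph at the
current point, then `x` can follow the target at speed at most `‖Φ_T⁻¹|𝓛‖ * ‖b - y‖`, and continuous
induction on `t` gives the bound. Relative surjectivity holds as soon as the moving point is the
second component of a point in the core of the graph. This is so for all `t < 1` when `(u, y)` lies
in the core, and the general case follows by translating both endpoints by `ε • p` with `p` in the
core and letting `ε → 0`.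
-/

section ConvexCone

variable {V : Type*} [AddCommGroup V] [Module ℝ V] {C : PointedCone ℝ V} {p : V}

theorem mem_tangConeAt_iff (hp : p ∈ C) {z : V} :
    z ∈ tangConeAt (C : Set V) p ↔ ∃ r : ℝ, r • p + z ∈ C := by
  constructor
  · rintro ⟨t, ht, hz⟩
    refine ⟨t⁻¹, ?_⟩
    simpa [smul_smul, inv_mul_cancel₀ ht.ne'] using C.smul_mem (inv_nonneg.2 ht.le) hz
  · rintro ⟨r, hz⟩
    have hs : 0 < |r| + 1 := by positivity
    refine ⟨(|r| + 1)⁻¹, inv_pos.2 hs, ?_⟩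
    have hsum : (|r| + 1) • p + z ∈ C := by
      have hr : 0 ≤ |r| + 1 - r := by linarith [le_abs_self r]
      convert C.add_mem (C.smul_mem hr hp) hz using 1
      module
    simpa [smul_smul, inv_mul_cancel₀ hs.ne'] using C.smul_mem (inv_nonneg.2 hs.le) hsum

theorem coe_sup_span_singleton_eq_tangConeAt (hp : p ∈ C) :
    ((C ⊔ (Submodule.span ℝ {p} : Submodule ℝ V) : PointedCone ℝ V) : Set V) =
      tangConeAt (C : Set V) p := by
  ext z
  rw [mem_tangConeAt_iff hp, SetLike.mem_coe, Submodule.mem_sup]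
  simp only [PointedCone.mem_ofSubmodule_iff, Submodule.mem_span_singleton]
  constructor
  · rintro ⟨c, hc, _, ⟨r, rfl⟩, rfl⟩
    exact ⟨-r, by simpa using hc⟩
  · rintro ⟨r, hr⟩
    exact ⟨_, hr, _, ⟨-r, rfl⟩, by module⟩

/-- The (algebraic) relative interior of a convex cone, encoded by order units: `q` lies in it when
every element of the cone is below some multiple of `q` in the order defined by the cone. -/
def coneCore (C : PointedCone ℝ V) : Set V :=
  {q | q ∈ C ∧ ∀ z ∈ C, ∃ r : ℝ, r • q - z ∈ C}

theorem add_smul_mem_coneCore {c q : V} (hc : c ∈ C) (hq : q ∈ coneCore C) {ε : ℝ} (hε : 0 < ε) :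
    c + ε • q ∈ coneCore C := by
  refine ⟨C.add_mem hc (C.smul_mem hε.le hq.1), fun z hz ↦ ?_⟩
  obtain ⟨r, hr⟩ := hq.2 z hz
  refine ⟨|r| / ε, ?_⟩
  have hsplit : (|r| / ε) • (c + ε • q) - z = (|r| / ε) • c + ((|r| - r) • q + (r • q - z)) := by
    rw [smul_add, smul_smul, div_mul_cancel₀ _ hε.ne']
    module
  rw [hsplit]
  exact C.add_mem (C.smul_mem (by positivity) hc)
    (C.add_mem (C.smul_mem (sub_nonneg.2 (le_abs_self r)) hq.1) hr)

end ConvexCone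

section PolyhedralCone

open Filter

variable {V : Type*} [AddCommGroup V] [Module ℝ V] {k : ℕ} {f : Fin k → (V →ₗ[ℝ] ℝ)}

theorem IsPolyhedralCone.exists_coe_eq {K : Set V} (hK : IsPolyhedralCone K) :
    ∃ C : PointedCone ℝ V, (C : Set V) = K := by
  obtain ⟨k, f, rfl⟩ := hK
  exact ⟨⨅ i, (PointedCone.positive ℝ ℝ).comap (f i), by ext; simp⟩

theorem tangConeAt_eq_active_constraints {p : V} (hp : ∀ i, 0 ≤ f i p) :
    tangConeAt {x | ∀ i, 0 ≤ f i x} p = {z | ∀ i, f i p = 0 → 0 ≤ f i z} := by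
  obtain ⟨C, hC⟩ := IsPolyhedralCone.exists_coe_eq ⟨k, f, rfl⟩
  have hmem {x : V} : x ∈ C ↔ ∀ i, 0 ≤ f i x := by rw [← SetLike.mem_coe, hC]; rfl
  ext z
  rw [← hC, mem_tangConeAt_iff (hmem.2 hp)]
  simp only [hmem, map_add, map_smul, smul_eq_mul, Set.mem_ofPred_eq]
  refine ⟨fun ⟨r, hr⟩ i hi ↦ by simpa [hi] using hr i, fun hz ↦ ?_⟩
  refine Eventually.exists (f := atTop) (eventually_all.2 fun i ↦ ?_)
  obtain hi | hi := (hp i).eq_or_lt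
  · exact .of_forall fun r ↦ by simpa [← hi] using hz i hi.symm
  · exact (tendsto_atTop_add_const_right _ _ (tendsto_id.atTop_mul_const hi)).eventually_ge_atTop 0

theorem IsPolyhedralCone.isPolyhedralCone_tangConeAt {K : Set V} (hK : IsPolyhedralCone K) {p : V}
    (hp : p ∈ K) : IsPolyhedralCone (tangConeAt K p) := by
  classical
  obtain ⟨k, f, rfl⟩ := hK
  refine ⟨k, fun i ↦ if f i p = 0 then f i else 0, ?_⟩
  rw [tangConeAt_eq_active_constraints hp]
  ext z
  refine forall_congr' fun i ↦ ?_
  by_cases hi : f i p = 0 <;> simp [hi]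

theorem IsPolyhedralCone.finite_tangentCones {K : Set V} (hK : IsPolyhedralCone K) :
    (tangentCones K).Finite := by
  obtain ⟨k, f, rfl⟩ := hK
  refine (Set.finite_range fun I : Set (Fin k) ↦ {z | ∀ i ∈ I, 0 ≤ f i z}).subset ?_
  rintro _ ⟨p, hp, rfl⟩
  exact ⟨{i | f i p = 0}, (tangConeAt_eq_active_constraints hp).symm⟩

theorem IsPolyhedralCone.coneCore_nonempty {C : PointedCone ℝ V}
    (hC : IsPolyhedralCone (C : Set V)) : (coneCore C).Nonempty := by
  obtain ⟨k, f, hf⟩ := hC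
  have hmem {x : V} : x ∈ C ↔ ∀ i, 0 ≤ f i x := by rw [← SetLike.mem_coe, hf]; rfl
  have hwitness (i) : ∃ w ∈ C, f i w = 0 → ∀ z ∈ C, f i z = 0 := by
    by_cases! hi : ∃ w ∈ C, f i w ≠ 0
    · exact hi.imp fun w hw ↦ ⟨hw.1, fun h ↦ (hw.2 h).elim⟩
    · exact ⟨0, C.zero_mem, fun _ ↦ hi⟩
  choose w hwC hw using hwitness
  have hpC : ∑ j, w j ∈ C := sum_mem fun j _ ↦ hwC j
  refine ⟨∑ j, w j, hpC, fun z hz ↦ ?_⟩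
  suffices -z ∈ tangConeAt (C : Set V) (∑ j, w j) by
    simpa [sub_eq_add_neg] using (mem_tangConeAt_iff hpC).1 this
  rw [hf, tangConeAt_eq_active_constraints (hmem.1 hpC)]
  intro i hi
  have hwi : f i (w i) = 0 := by
    rw [map_sum, Finset.sum_eq_zero_iff_of_nonneg fun j _ ↦ hmem.1 (hwC j) i] at hi
    exact hi i (Finset.mem_univ i)
  simp [hw i hwi z hz]

end PolyhedralCone

theorem IsPolyhedralCone.isClosed {V : Type*} [NormedAddCommGroup V] [NormedSpace ℝ V]
    [FiniteDimensional ℝ V] {K : Set V} (hK : IsPolyhedralCone K) : IsClosed K := by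
  obtain ⟨k, f, rfl⟩ := hK
  simp only [Set.ofPred_forall]
  exact isClosed_iInter fun i ↦ isClosed_le continuous_const (f i).continuous_of_finiteDimensional

section RelativeSurjectivity

variable {E F : Type*} [AddCommGroup E] [Module ℝ E] [AddCommGroup F] [Module ℝ F]

/-- Relative surjectivity of the set-valued mapping with graph `T`: its image is a linear
subspace. This is `RelSurjGraph` for arbitrary real vector spaces. -/
def IsRelSurjective (T : Set (E × F)) : Prop :=
  ∃ W : Submodule ℝ F, {y | ∃ x, (x, y) ∈ T} = (W : Set F)

theorem isRelSurjective_of_neg_mem_image {T : PointedCone ℝ (E × F)}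
    (hneg : ∀ z ∈ T, ∃ x, (x, -z.2) ∈ T) : IsRelSurjective (T : Set (E × F)) := by
  refine ⟨(T.map (LinearMap.snd ℝ E F)).lineal, ?_⟩
  ext y
  simp only [SetLike.mem_coe, PointedCone.mem_lineal, PointedCone.mem_map, LinearMap.snd_apply,
    Prod.exists, exists_eq_right, Set.mem_ofPred_eq]
  exact ⟨fun ⟨x, hx⟩ ↦ ⟨⟨x, hx⟩, hneg _ hx⟩, And.left⟩

theorem isRelSurjective_tangConeAt {C : PointedCone ℝ (E × F)} {a q : E × F} (ha : a ∈ C)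
    (hq : q ∈ coneCore C) (haq : a.2 = q.2) : IsRelSurjective (tangConeAt (C : Set (E × F)) a) := by
  rw [← coe_sup_span_singleton_eq_tangConeAt ha]
  refine isRelSurjective_of_neg_mem_image fun z hz ↦ ?_
  rw [← SetLike.mem_coe, coe_sup_span_singleton_eq_tangConeAt ha, mem_tangConeAt_iff ha] at hz
  obtain ⟨s, hs⟩ := hz
  obtain ⟨r, hr⟩ := hq.2 _ hs
  set w : E × F := r • q - (s • a + z) - (r - s) • a with hw
  have hw_snd : w.2 = -z.2 := by
    simp only [hw, Prod.snd_sub, Prod.snd_add, Prod.smul_snd, haq]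
    module
  refine ⟨w.1, ?_⟩
  rw [← hw_snd, ← SetLike.mem_coe, coe_sup_span_singleton_eq_tangConeAt ha, mem_tangConeAt_iff ha]
  exact ⟨r - s, by rwa [hw, add_sub_cancel]⟩

end RelativeSurjectivity

section MinNorm

variable {E F : Type*} [NormedAddCommGroup E] {T : Set (E × F)} {x : E} {y : F}

/-- The least norm of a preimage of `y` under the set-valued mapping with graph `T`; it is `0` when
`y` has no preimage. -/
noncomputable def minNorm (T : Set (E × F)) (y : F) : ℝ :=
  sInf {r | ∃ x : E, (x, y) ∈ T ∧ r = ‖x‖}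

theorem minNorm_le (hx : (x, y) ∈ T) : minNorm T y ≤ ‖x‖ :=
  csInf_le ⟨0, by rintro _ ⟨x, -, rfl⟩; exact norm_nonneg x⟩ ⟨x, hx, rfl⟩

theorem exists_norm_eq_minNorm [ProperSpace E] [TopologicalSpace F] (hT : IsClosed T)
    (hy : ∃ x, (x, y) ∈ T) :
    ∃ x, (x, y) ∈ T ∧ ‖x‖ = minNorm T y := by
  have hclosed : IsClosed {x | (x, y) ∈ T} := hT.preimage (.prodMk_left y)
  obtain ⟨x, hx, hdist⟩ := hclosed.exists_infDist_eq_dist hy 0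
  refine ⟨x, hx, le_antisymm (le_csInf ⟨_, x, hx, rfl⟩ ?_) (minNorm_le hx)⟩
  rintro _ ⟨x', hx', rfl⟩
  rw [← dist_zero_left, ← dist_zero_left, ← hdist]
  exact infDist_le_dist_of_mem hx'

variable [NormedSpace ℝ E]

theorem convexOn_minNorm [ProperSpace E] [TopologicalSpace F] [AddCommGroup F] [Module ℝ F]
    (hT : IsClosed T) (hconv : Convex ℝ T) :
    ConvexOn ℝ {y | ∃ x, (x, y) ∈ T} (minNorm T) := by
  refine ⟨?_, ?_⟩
  · rintro y ⟨x, hx⟩ y' ⟨x', hx'⟩ a b ha hb hab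
    exact ⟨_, hconv hx hx' ha hb hab⟩
  · intro y hy y' hy' a b ha hb hab
    obtain ⟨x, hx, hxmin⟩ := exists_norm_eq_minNorm hT hy
    obtain ⟨x', hx', hxmin'⟩ := exists_norm_eq_minNorm hT hy'
    calc minNorm T (a • y + b • y')
      _ ≤ ‖a • x + b • x'‖ := minNorm_le (hconv hx hx' ha hb hab)
      _ ≤ ‖a • x‖ + ‖b • x'‖ := norm_add_le _ _
      _ = a • minNorm T y + b • minNorm T y' := by
        rw [norm_smul_of_nonneg ha, norm_smul_of_nonneg hb, hxmin, hxmin', smul_eq_mul, smul_eq_mul]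

variable [NormedAddCommGroup F] [NormedSpace ℝ F]

-- A convex function on a finite-dimensional space is continuous, hence bounded on the unit ball.
theorem IsRelSurjective.exists_minNorm_le [ProperSpace E] [FiniteDimensional ℝ F]
    (hsurj : IsRelSurjective T) (hT : IsClosed T) (hconv : Convex ℝ T) :
    ∃ M, ∀ y, (∃ x, (x, y) ∈ T) → ‖y‖ ≤ 1 → minNorm T y ≤ M := by
  obtain ⟨W, hW⟩ := hsurj
  have hconvW : ConvexOn ℝ Set.univ (minNorm T ∘ W.subtype) := by
    have hpre : W.subtype ⁻¹' {y | ∃ x, (x, y) ∈ T} = Set.univ := by simp [hW]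
    exact hpre ▸ (convexOn_minNorm hT hconv).comp_linearMap W.subtype
  obtain ⟨M, hM⟩ := (isCompact_closedBall (0 : W) 1).bddAbove_image
    ((hconvW.continuousOn isOpen_univ).mono (Set.subset_univ _))
  refine ⟨M, fun y hy hy1 ↦ ?_⟩
  have hyW : y ∈ W := hW.subset hy
  exact hM ⟨⟨y, hyW⟩, by simpa using hy1, rfl⟩

/-- The norm `‖Φ_T⁻¹|𝓛‖` of the inverse of the set-valued mapping with graph `T`, restricted to
`𝓛`. This is `nrmInvRes` for arbitrary normed spaces and an arbitrary set `𝓛`. -/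
noncomputable def restrictedInvNorm (T : Set (E × F)) (L : Set F) : ℝ :=
  sSup {t | ∃ y : F, (∃ x, (x, y) ∈ T) ∧ y ∈ L ∧ ‖y‖ ≤ 1 ∧ t = minNorm T y}

theorem IsRelSurjective.exists_norm_le_restrictedInvNorm_mul [ProperSpace E]
    [FiniteDimensional ℝ F] {T : PointedCone ℝ (E × F)} (hsurj : IsRelSurjective (T : Set (E × F)))
    (hT : IsClosed (T : Set (E × F))) {L : Set F} (hL : ∀ c : ℝ, 0 < c → ∀ y ∈ L, c • y ∈ L)
    {v : F} (hv : ∃ x, (x, v) ∈ T) (hvL : v ∈ L) :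
    ∃ w, (w, v) ∈ T ∧ ‖w‖ ≤ restrictedInvNorm (T : Set (E × F)) L * ‖v‖ := by
  obtain rfl | hv0 := eq_or_ne v 0
  · exact ⟨0, T.zero_mem, by simp⟩
  have hvpos : 0 < ‖v‖ := norm_pos_iff.2 hv0
  have hunit : ∃ x, (x, ‖v‖⁻¹ • v) ∈ T :=
    hv.elim fun x hx ↦ ⟨‖v‖⁻¹ • x, T.smul_mem (inv_nonneg.2 hvpos.le) hx⟩
  obtain ⟨w, hw, hwmin⟩ := exists_norm_eq_minNorm hT hunit
  have hle : ‖w‖ ≤ restrictedInvNorm (T : Set (E × F)) L := by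
    obtain ⟨M, hM⟩ := hsurj.exists_minNorm_le hT T.convex
    refine hwmin.trans_le (le_csSup ⟨M, ?_⟩ ⟨_, hunit, hL _ (inv_pos.2 hvpos) _ hvL, ?_, rfl⟩)
    · rintro _ ⟨y, hy, -, hy1, rfl⟩
      exact hM y hy hy1
    · rw [norm_smul, norm_inv, norm_norm, inv_mul_cancel₀ hvpos.ne']
  refine ⟨‖v‖ • w, ?_, ?_⟩
  · simpa [smul_smul, mul_inv_cancel₀ hvpos.ne'] using T.smul_mem hvpos.le hw
  · rw [norm_smul, norm_norm, mul_comm]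
    gcongr

end MinNorm

section ContinuousInduction

variable {E F : Type*} [NormedAddCommGroup E] [ProperSpace E]

open Filter Topology in
theorem isClosed_setOf_exists_mem_norm_sub_le [TopologicalSpace F] {X : Type*} [TopologicalSpace X]
    [SequentialSpace X] {K : Set (E × F)} (hK : IsClosed K) {c : X → E} {g : X → F} {r : X → ℝ}
    (hc : Continuous c) (hg : Continuous g) (hr : Continuous r) :
    IsClosed {t | ∃ x, (x, g t) ∈ K ∧ ‖x - c t‖ ≤ r t} := by
  refine IsSeqClosed.isClosed fun t a ht hta ↦ ?_
  choose x hxK hx using ht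
  obtain ⟨R, hR⟩ : BddAbove (Set.range fun j ↦ ‖c (t j)‖ + r (t j)) :=
    (((hc.norm.add hr).tendsto a).comp hta).bddAbove_range
  have hxR (j) : x j ∈ closedBall 0 R := by
    rw [mem_closedBall_zero_iff]
    calc ‖x j‖
      _ ≤ ‖c (t j)‖ + ‖x j - c (t j)‖ := norm_le_insert' _ _
      _ ≤ ‖c (t j)‖ + r (t j) := by gcongr; exact hx j
      _ ≤ R := hR ⟨j, rfl⟩
  obtain ⟨x₀, -, φ, hφ, hx₀⟩ := tendsto_subseq_of_bounded isBounded_closedBall hxR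
  have htφ : Tendsto (t ∘ φ) atTop (𝓝 a) := hta.comp hφ.tendsto_atTop
  refine ⟨x₀, hK.mem_of_tendsto (hx₀.prodMk_nhds ((hg.tendsto a).comp htφ))
    (.of_forall fun j ↦ hxK (φ j)), ?_⟩
  exact le_of_tendsto_of_tendsto' (hx₀.sub ((hc.tendsto a).comp htφ)).norm
    ((hr.tendsto a).comp htφ) fun j ↦ hx (φ j)

open Set in
theorem exists_mem_norm_sub_le_of_tangent_directions [NormedSpace ℝ E] [AddCommGroup F] [Module ℝ F]
    [TopologicalSpace F] [ContinuousAdd F] [ContinuousSMul ℝ F] {K : Set (E × F)} (hK : IsClosed K)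
    (hconv : Convex ℝ K) {M : ℝ} {u : E} {y v : F} (hu : (u, y) ∈ K)
    (hstep : ∀ t ∈ Ico (0 : ℝ) 1, ∀ x, (x, y + t • v) ∈ K →
      ∃ w, (w, v) ∈ tangConeAt K (x, y + t • v) ∧ ‖w‖ ≤ M) :
    ∃ x, (x, y + v) ∈ K ∧ ‖x - u‖ ≤ M := by
  set S : Set ℝ := {t | ∃ x, (x, y + t • v) ∈ K ∧ ‖x - u‖ ≤ M * t}
  have hclosed : IsClosed S := isClosed_setOf_exists_mem_norm_sub_le hK (c := fun _ ↦ u)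
    (by fun_prop) (by fun_prop) (by fun_prop)
  have hzero : (0 : ℝ) ∈ S := ⟨u, by simpa using hu, by simp⟩
  suffices (1 : ℝ) ∈ S by simpa [S] using this
  refine (hclosed.inter isClosed_Icc).Icc_subset_of_forall_exists_gt hzero ?_
    (right_mem_Icc.2 zero_le_one)
  rintro t ⟨⟨x, hxK, hx⟩, ht⟩ t' htt'
  obtain ⟨w, ⟨s, hs, hsK⟩, hw⟩ := hstep t ht x hxK
  set r := min s (t' - t)
  have hr : 0 < r := lt_min hs (sub_pos.2 htt')
  have hrK : (x, y + t • v) + r • (w, v) ∈ K := by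
    have hrs : r / s ∈ Icc (0 : ℝ) 1 := ⟨by positivity, (div_le_one hs).2 (min_le_left _ _)⟩
    simpa only [smul_smul, div_mul_cancel₀ r hs.ne'] using hconv.add_smul_mem hxK hsK hrs
  refine ⟨t + r, ⟨x + r • w, ?_, ?_⟩, by linarith, by linarith [min_le_right s (t' - t)]⟩
  · simpa only [Prod.smul_mk, Prod.mk_add_mk, add_assoc, ← add_smul] using hrK
  · calc ‖x + r • w - u‖ = ‖(x - u) + r • w‖ := by congr 1; abel
      _ ≤ ‖x - u‖ + r * ‖w‖ := by rw [← norm_smul_of_nonneg hr.le]; exact norm_add_le _ _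
      _ ≤ M * t + r * M := by gcongr
      _ = M * (t + r) := by ring

end ContinuousInduction

section HoffmanBound

variable {E F : Type*} [NormedAddCommGroup E] [NormedSpace ℝ E] [NormedAddCommGroup F]
  [NormedSpace ℝ F] {L : Set F}

/-- The Hoffman constant `H(Φ|𝓛)` of the set-valued mapping with graph `K`. This is `HoffSV` for
arbitrary normed spaces and an arbitrary set `𝓛`. -/
noncomputable def hoffmanConst (K : Set (E × F)) (L : Set F) : ℝ :=
  sSup {t | ∃ T ∈ tangentCones K, IsRelSurjective T ∧ t = restrictedInvNorm T L}

theorem IsPolyhedralCone.restrictedInvNorm_le_hoffmanConst {K T : Set (E × F)}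
    (hK : IsPolyhedralCone K) (hT : T ∈ tangentCones K) (hsurj : IsRelSurjective T) :
    restrictedInvNorm T L ≤ hoffmanConst K L := by
  refine le_csSup ((hK.finite_tangentCones.image (restrictedInvNorm · L)).subset ?_).bddAbove
    ⟨T, hT, hsurj, rfl⟩
  rintro _ ⟨T, hT, -, rfl⟩
  exact ⟨T, hT, rfl⟩

variable [FiniteDimensional ℝ E] [FiniteDimensional ℝ F] {C : PointedCone ℝ (E × F)}

theorem IsPolyhedralCone.exists_tangent_direction_norm_le (hC : IsPolyhedralCone (C : Set (E × F)))
    (hL : ∀ c : ℝ, 0 < c → ∀ y ∈ L, c • y ∈ L) {a q : E × F} (ha : a ∈ C) (hq : q ∈ coneCore C)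
    (haq : a.2 = q.2) {v : F} (hvL : v ∈ L) (hv : ∃ w, (w, v) ∈ tangConeAt (C : Set (E × F)) a) :
    ∃ w, (w, v) ∈ tangConeAt (C : Set (E × F)) a ∧
      ‖w‖ ≤ hoffmanConst (C : Set (E × F)) L * ‖v‖ := by
  have hsurj := isRelSurjective_tangConeAt ha hq haq
  obtain ⟨T, hT⟩ := (hC.isPolyhedralCone_tangConeAt ha).exists_coe_eq
  have hclosed := (hC.isPolyhedralCone_tangConeAt ha).isClosed
  have hle := hC.restrictedInvNorm_le_hoffmanConst (L := L) ⟨a, ha, rfl⟩ hsurj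
  rw [← hT] at hsurj hclosed hle hv ⊢
  obtain ⟨w, hw, hwle⟩ := hsurj.exists_norm_le_restrictedInvNorm_mul hclosed hL hv hvL
  exact ⟨w, hw, hwle.trans (by gcongr)⟩

theorem IsPolyhedralCone.exists_mem_norm_sub_le_of_mem_coneCore
    (hC : IsPolyhedralCone (C : Set (E × F))) (hL : ∀ c : ℝ, 0 < c → ∀ y ∈ L, c • y ∈ L)
    {u x' : E} {y v : F} (hu : (u, y) ∈ coneCore C) (hx' : (x', y + v) ∈ C) (hv : v ∈ L) :
    ∃ x, (x, y + v) ∈ C ∧ ‖x - u‖ ≤ hoffmanConst (C : Set (E × F)) L * ‖v‖ := by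
  refine exists_mem_norm_sub_le_of_tangent_directions hC.isClosed C.convex hu.1 fun t ht x hx ↦ ?_
  have ht' : 0 < 1 - t := sub_pos.2 ht.2
  have hq := add_smul_mem_coneCore (C.smul_mem ht.1 hx') hu ht'
  refine hC.exists_tangent_direction_norm_le hL hx hq ?_ hv
    ⟨(1 - t)⁻¹ • (x' - x), 1 - t, ht', ?_⟩
  · simp only [Prod.smul_mk, Prod.mk_add_mk]
    module
  · have hend : (x, y + t • v) + (1 - t) • ((1 - t)⁻¹ • (x' - x), v) = (x', y + v) := by
      ext1
      · simp [smul_inv_smul₀ ht'.ne']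
      · simp only [Prod.smul_mk, Prod.mk_add_mk]
        module
    exact hend ▸ hx'

theorem IsPolyhedralCone.exists_mem_norm_sub_le (hC : IsPolyhedralCone (C : Set (E × F)))
    (hL : ∀ c : ℝ, 0 < c → ∀ y ∈ L, c • y ∈ L) {u x' : E} {y v : F} (hu : (u, y) ∈ C)
    (hx' : (x', y + v) ∈ C) (hv : v ∈ L) :
    ∃ x, (x, y + v) ∈ C ∧ ‖x - u‖ ≤ hoffmanConst (C : Set (E × F)) L * ‖v‖ := by
  obtain ⟨p, hp⟩ := hC.coneCore_nonempty
  set S : Set ℝ := {ε | ∃ x, (x, y + ε • p.2 + v) ∈ (C : Set (E × F)) ∧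
    ‖x - (u + ε • p.1)‖ ≤ hoffmanConst (C : Set (E × F)) L * ‖v‖}
  have hclosed : IsClosed S := isClosed_setOf_exists_mem_norm_sub_le hC.isClosed
    (by fun_prop) (by fun_prop) continuous_const
  suffices (0 : ℝ) ∈ S by simpa [S] using this
  have hpos : Set.Ioi 0 ⊆ S := fun ε hε ↦ by
    have hmem : (x' + ε • p.1, y + ε • p.2 + v) ∈ C := by
      rw [add_right_comm]
      exact C.add_mem hx' (C.smul_mem (Set.mem_Ioi.1 hε).le hp.1)
    exact hC.exists_mem_norm_sub_le_of_mem_coneCore hL (add_smul_mem_coneCore hu hp hε) hmem hv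
  exact closure_minimal hpos hclosed (by simp)

theorem hoffman_bound_general {K : Set (E × F)} (hK : IsPolyhedralCone K)
    (hL : ∀ c : ℝ, 0 < c → ∀ y ∈ L, c • y ∈ L) {b : F} (hb : ∃ x, (x, b) ∈ K) {u : E} {y : F}
    (hu : (u, y) ∈ K) (hby : b - y ∈ L) :
    infDist u {x | (x, b) ∈ K} ≤ hoffmanConst K L * ‖b - y‖ := by
  obtain ⟨C, rfl⟩ := hK.exists_coe_eq
  obtain ⟨x', hx'⟩ := hb
  rw [← add_sub_cancel y b] at hx'
  obtain ⟨x, hx, hle⟩ := hK.exists_mem_norm_sub_le hL hu hx' hby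
  rw [add_sub_cancel] at hx
  calc infDist u {x | (x, b) ∈ C}
    _ ≤ dist u x := infDist_le_dist_of_mem hx
    _ = ‖x - u‖ := by rw [dist_comm, dist_eq_norm]
    _ ≤ hoffmanConst (C : Set (E × F)) L * ‖b - y‖ := hle

end HoffmanBound

theorem hoffman_bound {n m : ℕ} (Φ : (Fin n → ℝ) → Set (Fin m → ℝ))
    (hK : IsPolyhedralCone (svGraph Φ)) (L : Submodule ℝ (Fin m → ℝ))
    (b : Fin m → ℝ) (hb : ∃ x, b ∈ Φ x) (u : Fin n → ℝ) (hu : (Φ u).Nonempty) :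
    ∀ y ∈ Φ u, b - y ∈ L →
      infDist u {x | b ∈ Φ x} ≤ HoffSV Φ L * ‖b - y‖ :=
  fun _ hy hby ↦ hoffman_bound_general (L := (L : Set (Fin m → ℝ))) hK
    (fun c _ _ ↦ L.smul_mem c) hb hy hby
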